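/- Monotonicity in the number of tilted axes: for all d ≥ 1, all α ∈ [0,1) and all k = 0,…,d−1, one has p_L(α,d,k) ≤ p_L(α,d,k+1). -/

import Mathlib

open MeasureTheory Filter ENNReal

/-- Sites of `ℤ^{d+1}`. -/
abbrev Site (d : ℕ) := Fin (d + 1) → ℤ

/-- Site-percolation configurations on `ℤ^{d+1}`: a site is open iff its value is `true`. -/
abbrev Config (d : ℕ) := Site d → Bool

/-- `P` is the i.i.d. Bernoulli(`p`) product measure on `{0,1}^ι`: it is a probability
measure whose cylinder events have the correct product probabilities. -/
def IsBernoulli {ι : Type*} (p : ℝ) (P : Measure (ι → Bool)) : Prop :=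
  IsProbabilityMeasure P ∧
    ∀ (s : Finset ι) (f : ι → Bool),
      P {ω | ∀ x ∈ s, ω x = f x} =
        ∏ x ∈ s, (if f x then ENNReal.ofReal p else ENNReal.ofReal (1 - p))

/-- A function `F : ℤ^d → ℤ` is Lipschitz: `‖x − y‖₁ = 1 → |F x − F y| ≤ 1`. -/
def IsLipschitzFn {d : ℕ} (F : (Fin d → ℤ) → ℤ) : Prop :=
  ∀ x y : Fin d → ℤ, (∑ i, |x i - y i|) = 1 → |F x - F y| ≤ 1

/-- Height `⌊α ∑ᵢ ηᵢ xᵢ⌋` of the tilted plane `L^{α,d}_η` above `x ∈ ℤ^d`. -/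
noncomputable def planeHt (α : ℝ) {d : ℕ} (η x : Fin d → ℤ) : ℤ :=
  ⌊α * ∑ i, (η i : ℝ) * (x i : ℝ)⌋

/-- `η ∈ {-1,0,1}^d`. -/
def IsSign {d : ℕ} (η : Fin d → ℤ) : Prop := ∀ i, η i = -1 ∨ η i = 0 ∨ η i = 1

/-- The event `LIP^{α,d}_η` that there is an open Lipschitz surface lying (strictly) above
the tilted plane `L^{α,d}_η`. -/
def LIP (α : ℝ) {d : ℕ} (η : Fin d → ℤ) : Set (Config d) :=
  {ω | ∃ F : (Fin d → ℤ) → ℤ, IsLipschitzFn F ∧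
    ∀ x : Fin d → ℤ, ω (Fin.snoc x (F x)) = true ∧ planeHt α η x < F x}

/-- `pc` is the critical probability `p_L(α,d,η)` of Lipschitz percolation above the tilted
plane `L^{α,d}_η`: `pc ∈ (0,1)`, for `p` below it there is `P_p`-a.s. no open Lipschitz
surface above the plane, and for `p` above it there `P_p`-a.s. is one.
(Here `P p` is the Bernoulli(`p`) product measure on `{0,1}^{ℤ^{d+1}}`.) -/
def IsCriticalProb {d : ℕ} (P : ℝ → Measure (Config d)) (α : ℝ) (η : Fin d → ℤ)
    (pc : ℝ) : Prop :=
  pc ∈ Set.Ioo (0 : ℝ) 1 ∧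
    (∀ p, 0 ≤ p → p < pc → P p (LIP α η) = 0) ∧
    (∀ p, pc < p → p ≤ 1 → P p (LIP α η) = 1)

/-- The canonical direction vector `η ∈ {-1,0,1}^d` with `k` entries equal to `1`; the
critical probability `p_L(α,d,η)` depends on `η` only through `k = ‖η‖₁`, and
`p_L(α,d,k)` denotes the common value. -/
def etaK (d k : ℕ) : Fin d → ℤ := fun i => if (i : ℕ) < k then 1 else 0

/-!
The maximum of two open Lipschitz surfaces is again an open Lipschitz surface, and it lies above
the maximum of the two planes. Reflecting the configuration in the `j`-th axis preserves the
Bernoulli measure and flips the sign of `η j`; so if surfaces above the plane of direction `η`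
exist almost surely, then almost surely there is one above both this plane and its mirror image.
For `|a| ≤ |η j|` the maximum of these two planes dominates the plane obtained from `η` by
replacing `η j` with `a`. Changing one coordinate at a time, the almost sure existence of surfaces
passes from `η` to every `ζ` with `|ζ i| ≤ |η i|` for all `i`.
-/

section Reflect

variable {ι : Type*} [DecidableEq ι]

/-- The reflection of `ℤ^ι` in the hyperplane `x j = 0`, applied both to sites and to
direction vectors. -/
def reflect (j : ι) (x : ι → ℤ) : ι → ℤ := Function.update x j (-x j)

theorem reflect_involutive (j : ι) : Function.Involutive (reflect j) := fun x => by
  simp [reflect]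

theorem abs_reflect_sub_reflect (j : ι) (x y : ι → ℤ) (i : ι) :
    |reflect j x i - reflect j y i| = |x i - y i| := by
  obtain rfl | hij := eq_or_ne i j
  · simp only [reflect, Function.update_self]
    rw [neg_sub_neg, abs_sub_comm]
  · simp [reflect, hij]

theorem reflect_apply_mul (j : ι) (x y : ι → ℤ) (i : ι) :
    reflect j x i * y i = x i * reflect j y i := by
  obtain rfl | hij := eq_or_ne i j
  · simp [reflect]
  · simp [reflect, hij]

end Reflect

theorem reflect_castSucc_snoc {d : ℕ} (j : Fin d) (x : Fin d → ℤ) (a : ℤ) :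
    reflect j.castSucc (Fin.snoc x a : Site d) = Fin.snoc (reflect j x) a := by
  simp [reflect]

section Lipschitz

theorem abs_sub_le_of_abs_succ_sub_le {f : ℤ → ℤ} (hf : ∀ n, |f (n + 1) - f n| ≤ 1) (a b : ℤ) :
    |f a - f b| ≤ |a - b| := by
  have hadd : Monotone fun n => n + f n := monotone_int_of_le_succ fun n => by
    linarith [(abs_le.1 (hf n)).1]
  have hsub : Monotone fun n => n - f n := monotone_int_of_le_succ fun n => by
    linarith [(abs_le.1 (hf n)).2]
  wlog hab : a ≤ b generalizing a b
  · rw [abs_sub_comm (f a), abs_sub_comm a]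
    exact this b a (le_of_not_ge hab)
  rw [abs_sub_comm a, abs_of_nonneg (sub_nonneg.2 hab), abs_le]
  constructor <;> linarith [hadd hab, hsub hab]

namespace IsLipschitzFn

variable {d : ℕ} {F G : (Fin d → ℤ) → ℤ}

theorem comp_reflect (hF : IsLipschitzFn F) (j : Fin d) : IsLipschitzFn (F ∘ reflect j) :=
  fun x y hxy => hF _ _ (by simpa only [abs_reflect_sub_reflect] using hxy)

theorem max (hF : IsLipschitzFn F) (hG : IsLipschitzFn G) :
    IsLipschitzFn fun x => max (F x) (G x) :=
  fun x y hxy => (abs_max_sub_max_le_max _ _ _ _).trans (max_le (hF x y hxy) (hG x y hxy))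

theorem abs_update_sub_update_le (hF : IsLipschitzFn F) (x : Fin d → ℤ) (j : Fin d) (a b : ℤ) :
    |F (Function.update x j a) - F (Function.update x j b)| ≤ |a - b| := by
  refine abs_sub_le_of_abs_succ_sub_le (f := fun n => F (Function.update x j n)) (fun n => ?_) a b
  refine hF _ _ ?_
  rw [Finset.sum_eq_single j (fun i _ hij => by simp [hij]) (by simp)]
  simp

theorem abs_sub_le (hF : IsLipschitzFn F) (x y : Fin d → ℤ) :
    |F x - F y| ≤ ∑ i, |x i - y i| := by
  suffices ∀ s : Finset (Fin d), |F (s.piecewise x y) - F y| ≤ ∑ i ∈ s, |x i - y i| by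
    simpa using this Finset.univ
  intro s
  induction s using Finset.induction_on with
  | empty => simp
  | insert j s hj ih =>
    set z := s.piecewise x y
    have hzj : Function.update z j (y j) = z :=
      Function.update_eq_self_iff.2 (s.piecewise_eq_of_notMem x y hj).symm
    rw [Finset.piecewise_insert, Finset.sum_insert hj]
    calc |F (Function.update z j (x j)) - F y|
        ≤ |F (Function.update z j (x j)) - F z| + |F z - F y| := _root_.abs_sub_le _ _ _
      _ ≤ |x j - y j| + ∑ i ∈ s, |x i - y i| := by
        refine add_le_add ?_ ih
        simpa only [hzj] using hF.abs_update_sub_update_le z j (x j) (y j)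

end IsLipschitzFn

theorem isClosed_setOf_isLipschitzFn (d : ℕ) :
    IsClosed {F : (Fin d → ℤ) → ℤ | IsLipschitzFn F} := by
  simp only [IsLipschitzFn, Set.ofPred_forall]
  exact isClosed_iInter fun x => isClosed_iInter fun y => isClosed_iInter fun _ =>
    isClosed_le (by fun_prop) continuous_const

theorem isCompact_setOf_isLipschitzFn_and_apply_eq {d : ℕ} (x : Fin d → ℤ) (n : ℤ) :
    IsCompact {F : (Fin d → ℤ) → ℤ | IsLipschitzFn F ∧ F x = n} := by
  have hbox : IsCompact (Set.pi Set.univ fun y : Fin d → ℤ =>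
      Set.Icc (n - ∑ i, |y i - x i|) (n + ∑ i, |y i - x i|)) :=
    isCompact_univ_pi fun _ => (Set.finite_Icc _ _).isCompact
  refine hbox.of_isClosed_subset ?_ ?_
  · exact (isClosed_setOf_isLipschitzFn d).inter (isClosed_eq (by fun_prop) continuous_const)
  · rintro F ⟨hF, rfl⟩ y -
    obtain ⟨hlower, hupper⟩ := abs_le.1 (hF.abs_sub_le y x)
    constructor <;> linarith

end Lipschitz

section Measurability

theorem continuous_uncurry_apply_of_discreteTopology {ι X : Type*} [TopologicalSpace ι]
    [DiscreteTopology ι] [TopologicalSpace X] : Continuous fun q : ι × (ι → X) => q.2 q.1 :=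
  continuous_prod_of_discrete_left.2 continuous_apply

variable {d : ℕ} (α : ℝ) (η : Fin d → ℤ)

theorem isClosed_setOf_open_and_planeHt_lt :
    IsClosed {q : ((Fin d → ℤ) → ℤ) × Config d |
      ∀ x, q.2 (Fin.snoc x (q.1 x)) = true ∧ planeHt α η x < q.1 x} := by
  simp only [Set.ofPred_forall, Set.ofPred_and]
  refine isClosed_iInter fun x => IsClosed.inter ?_ ?_
  · have hsite : Continuous fun q : ((Fin d → ℤ) → ℤ) × Config d =>
        (Fin.snoc x (q.1 x) : Site d) :=
      (continuous_of_discreteTopology (f := fun n : ℤ => (Fin.snoc x n : Site d))).comp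
        (by fun_prop)
    exact isClosed_eq
      (continuous_uncurry_apply_of_discreteTopology.comp (hsite.prodMk continuous_snd))
      continuous_const
  · exact isClosed_le (f := fun _ => planeHt α η x + 1) continuous_const (by fun_prop)

/-- Once the height at the origin is fixed, the surfaces range over a compact set, so `LIP` is a
countable union of projections of compact sets. -/
theorem measurableSet_LIP : MeasurableSet (LIP α η) := by
  let K (n : ℤ) : Set ((Fin d → ℤ) → ℤ) := {F | IsLipschitzFn F ∧ F 0 = n}
  let C : Set (((Fin d → ℤ) → ℤ) × Config d) :=
    {q | ∀ x, q.2 (Fin.snoc x (q.1 x)) = true ∧ planeHt α η x < q.1 x}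
  have hLIP : LIP α η = ⋃ n, Prod.snd '' (K n ×ˢ Set.univ ∩ C) := by
    ext ω
    simp only [Set.mem_iUnion, Set.mem_image]
    constructor
    · rintro ⟨F, hF, hFω⟩
      exact ⟨F 0, (F, ω), ⟨⟨⟨hF, rfl⟩, trivial⟩, hFω⟩, rfl⟩
    · rintro ⟨n, ⟨F, ω⟩, ⟨⟨⟨hF, -⟩, -⟩, hFω⟩, rfl⟩
      exact ⟨F, hF, hFω⟩
  have hcompact (n : ℤ) : IsCompact (Prod.snd '' (K n ×ˢ Set.univ ∩ C)) :=
    (((isCompact_setOf_isLipschitzFn_and_apply_eq 0 n).prod isCompact_univ).inter_right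
      (isClosed_setOf_open_and_planeHt_lt α η)).image continuous_snd
  rw [hLIP]
  exact MeasurableSet.iUnion fun n => (hcompact n).measurableSet

end Measurability

namespace IsBernoulli

variable {ι κ : Type*} {p : ℝ} {P Q : Measure (ι → Bool)}

theorem unique (hP : IsBernoulli p P) (hQ : IsBernoulli p Q) : P = Q := by
  have := hP.1
  have := hQ.1
  refine IsProjectiveLimit.unique (P := fun s => P.map s.restrict) (fun _ => rfl) fun s => ?_
  refine Measure.ext_of_singleton fun f => ?_
  have hpre : s.restrict (π := fun _ : ι => Bool) ⁻¹' {f} =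
      {ω : ι → Bool | ∀ x ∈ s, ω x = Function.extend Subtype.val f (fun _ => false) x} := by
    ext ω
    simp only [Set.mem_preimage, Set.mem_singleton_iff, Set.mem_ofPred_eq, funext_iff,
      Subtype.forall, Finset.restrict]
    exact forall₂_congr fun x hx => by
      rw [← Subtype.val_injective.extend_apply f (fun _ => false) ⟨x, hx⟩]
  rw [Measure.map_apply (by fun_prop) (measurableSet_singleton f),
    Measure.map_apply (by fun_prop) (measurableSet_singleton f), hpre, hP.2, hQ.2]

theorem map_comp_embedding (hP : IsBernoulli p P) (e : κ ↪ ι) :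
    IsBernoulli p (P.map fun ω => ω ∘ e) := by
  have := hP.1
  have hcomp : Measurable fun ω : ι → Bool => ω ∘ e := by fun_prop
  refine ⟨Measure.isProbabilityMeasure_map hcomp.aemeasurable, fun s f => ?_⟩
  have hcyl : MeasurableSet {ω : κ → Bool | ∀ x ∈ s, ω x = f x} := by
    simp only [Set.ofPred_forall]
    exact s.measurableSet_biInter fun x _ =>
      measurableSet_eq_fun (measurable_pi_apply x) measurable_const
  have hpre : (fun ω : ι → Bool => ω ∘ e) ⁻¹' {ω | ∀ x ∈ s, ω x = f x} =
      {ω | ∀ y ∈ s.map e, ω y = Function.extend e f (fun _ => false) y} := by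
    ext ω
    simp [e.injective.extend_apply]
  rw [Measure.map_apply hcomp hcyl, hpre, hP.2, Finset.prod_map]
  simp [e.injective.extend_apply]

theorem measurePreserving_comp_equiv (hP : IsBernoulli p P) (e : ι ≃ ι) :
    MeasurePreserving (fun ω => ω ∘ e) P P :=
  ⟨by fun_prop, (hP.map_comp_embedding e.toEmbedding).unique hP⟩

end IsBernoulli

section Planes

variable {d : ℕ} {α : ℝ} {η η₁ η₂ ζ : Fin d → ℤ}

theorem planeHt_reflect (α : ℝ) (η : Fin d → ℤ) (j : Fin d) (x : Fin d → ℤ) :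
    planeHt α (reflect j η) x = planeHt α η (reflect j x) := by
  simp only [planeHt, ← Int.cast_mul, reflect_apply_mul]

theorem sum_update_mul (η : Fin d → ℤ) (j : Fin d) (a : ℤ) (x : Fin d → ℤ) :
    ∑ i, (Function.update η j a i : ℝ) * (x i : ℝ) =
      ∑ i ∈ Finset.univ.erase j, (η i : ℝ) * (x i : ℝ) + a * x j := by
  rw [← Finset.sum_erase_add _ _ (Finset.mem_univ j), Function.update_self]
  congr 1
  exact Finset.sum_congr rfl fun i hi => by
    rw [Function.update_of_ne (Finset.ne_of_mem_erase hi)]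

theorem planeHt_update_le_max (α : ℝ) {j : Fin d} {a : ℤ} (ha : |a| ≤ |η j|) (x : Fin d → ℤ) :
    planeHt α (Function.update η j a) x ≤
      max (planeHt α η x) (planeHt α (reflect j η) x) := by
  set S := ∑ i ∈ Finset.univ.erase j, (η i : ℝ) * (x i : ℝ)
  have hη : ∑ i, (η i : ℝ) * (x i : ℝ) = S + η j * x j := by
    simpa only [Function.update_eq_self] using sum_update_mul η j (η j) x
  have hreflect : ∑ i, (reflect j η i : ℝ) * (x i : ℝ) = S - η j * x j := by
    simpa only [reflect, Int.cast_neg, neg_mul, ← sub_eq_add_neg] using sum_update_mul η j (-η j) x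
  have ha' : |(a : ℝ)| ≤ |(η j : ℝ)| := by exact_mod_cast ha
  have haxis : α * (a * x j) ≤ |α * (η j * x j)| := by
    refine (le_abs_self _).trans ?_
    simp only [abs_mul]
    exact mul_le_mul_of_nonneg_left (mul_le_mul_of_nonneg_right ha' (abs_nonneg _)) (abs_nonneg _)
  simp only [planeHt, ← Int.floor_mono.map_max, hη, hreflect, sum_update_mul]
  refine Int.floor_le_floor ?_
  calc α * (S + a * x j) ≤ α * S + |α * (η j * x j)| := by linarith
    _ = max (α * (S + η j * x j)) (α * (S - η j * x j)) := by
      rw [abs_eq_max_neg, ← max_add_add_left]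
      ring_nf

theorem LIP_inter_LIP_subset_of_planeHt_le_max
    (h : ∀ x, planeHt α ζ x ≤ max (planeHt α η₁ x) (planeHt α η₂ x)) :
    LIP α η₁ ∩ LIP α η₂ ⊆ LIP α ζ := by
  rintro ω ⟨⟨F, hF, hFω⟩, ⟨G, hG, hGω⟩⟩
  refine ⟨_, hF.max hG, fun x => ⟨?_, (h x).trans_lt (max_lt_max (hFω x).2 (hGω x).2)⟩⟩
  rcases max_choice (F x) (G x) with hmax | hmax <;> rw [hmax]
  exacts [(hFω x).1, (hGω x).1]

theorem mem_LIP_reflect_of_comp_reflect_mem {ω : Config d} {j : Fin d}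
    (hω : ω ∘ reflect j.castSucc ∈ LIP α η) :
    ω ∈ LIP α (reflect j η) := by
  obtain ⟨F, hF, hFω⟩ := hω
  refine ⟨_, hF.comp_reflect j, fun x => ?_⟩
  obtain ⟨hopen, habove⟩ := hFω (reflect j x)
  rw [Function.comp_apply, reflect_castSucc_snoc, reflect_involutive] at hopen
  exact ⟨hopen, (planeHt_reflect α η j x).trans_lt habove⟩

end Planes

namespace IsBernoulli

variable {d : ℕ} {p α : ℝ} {P : Measure (Config d)} {η ζ : Fin d → ℤ}

theorem ae_mem_LIP_reflect (hP : IsBernoulli p P) (hη : ∀ᵐ ω ∂P, ω ∈ LIP α η) (j : Fin d) :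
    ∀ᵐ ω ∂P, ω ∈ LIP α (reflect j η) := by
  have hpres := hP.measurePreserving_comp_equiv (reflect_involutive j.castSucc).toPerm
  filter_upwards [hpres.quasiMeasurePreserving.ae hη] with ω hω
  exact mem_LIP_reflect_of_comp_reflect_mem hω

theorem ae_mem_LIP_update (hP : IsBernoulli p P) (hη : ∀ᵐ ω ∂P, ω ∈ LIP α η) {j : Fin d} {a : ℤ}
    (ha : |a| ≤ |η j|) : ∀ᵐ ω ∂P, ω ∈ LIP α (Function.update η j a) := by
  filter_upwards [hη, hP.ae_mem_LIP_reflect hη j] with ω hω hω'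
  exact LIP_inter_LIP_subset_of_planeHt_le_max (planeHt_update_le_max α ha) ⟨hω, hω'⟩

theorem ae_mem_LIP_of_abs_le (hP : IsBernoulli p P) (hη : ∀ᵐ ω ∂P, ω ∈ LIP α η)
    (hζη : ∀ i, |ζ i| ≤ |η i|) : ∀ᵐ ω ∂P, ω ∈ LIP α ζ := by
  suffices ∀ s : Finset (Fin d), ∀ᵐ ω ∂P, ω ∈ LIP α (s.piecewise ζ η) by
    simpa using this Finset.univ
  intro s
  induction s using Finset.induction_on with
  | empty => simpa using hη
  | insert j s hj ih =>
    rw [Finset.piecewise_insert]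
    exact hP.ae_mem_LIP_update ih (by simpa [hj] using hζη j)

end IsBernoulli

theorem abs_etaK_le_abs_etaK {d k l : ℕ} (hkl : k ≤ l) (i : Fin d) :
    |etaK d k i| ≤ |etaK d l i| := by
  unfold etaK
  split_ifs <;> first | omega | simp

theorem critical_prob_mono_in_tilted_axes_general
    {d : ℕ} (α : ℝ) {η ζ : Fin d → ℤ} (hζη : ∀ i, |ζ i| ≤ |η i|)
    (P : ℝ → Measure (Config d)) (hP : ∀ p ∈ Set.Icc (0 : ℝ) 1, IsBernoulli p (P p))
    (pc pc' : ℝ) (hpc : IsCriticalProb P α ζ pc) (hpc' : IsCriticalProb P α η pc') :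
    pc ≤ pc' := by
  by_contra! hlt
  obtain ⟨p, hp', hp⟩ := exists_between hlt
  have hp0 : 0 ≤ p := (hpc'.1.1.trans hp').le
  have hp1 : p ≤ 1 := (hp.trans hpc.1.2).le
  have hBer : IsBernoulli p (P p) := hP p ⟨hp0, hp1⟩
  have := hBer.1
  have hη : ∀ᵐ ω ∂P p, ω ∈ LIP α η :=
    (mem_ae_iff_prob_eq_one (measurableSet_LIP α η)).2 (hpc'.2.2 p hp' hp1)
  have hζ : ∀ᵐ ω ∂P p, ω ∉ LIP α ζ := measure_eq_zero_iff_ae_notMem.1 (hpc.2.1 p hp0 hp)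
  obtain ⟨ω, hmem, hnotMem⟩ := ((hBer.ae_mem_LIP_of_abs_le hη hζη).and hζ).exists
  exact hnotMem hmem

/-- Monotonicity in the number of tilted axes:
`p_L(α,d,k) ≤ p_L(α,d,k+1)` for `k = 0,…,d−1`. -/
theorem critical_prob_mono_in_tilted_axes
    {d : ℕ} (hd : 1 ≤ d) (α : ℝ) (hα : α ∈ Set.Ico (0 : ℝ) 1) (k : ℕ) (hk : k ≤ d - 1)
    (P : ℝ → Measure (Config d)) (hP : ∀ p ∈ Set.Icc (0 : ℝ) 1, IsBernoulli p (P p))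
    (pc pc' : ℝ) (hpc : IsCriticalProb P α (etaK d k) pc)
    (hpc' : IsCriticalProb P α (etaK d (k + 1)) pc') :
    pc ≤ pc' :=
  critical_prob_mono_in_tilted_axes_general α (abs_etaK_le_abs_etaK k.le_succ) P hP
    pc pc' hpc hpc'
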